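/- Let α, β, γ be real numbers with α > -1/2, α + β + γ > -3/2, γ > −1/2, and let θ > 0. Define h(T) = ∫₀ᵀ s^{2α}(T−s)^γ (∫ₛᵀ e^{θt} t^β (t−s)^γ dt) ds for T > 0. Then lim_{T→+∞} h(T) / (T^{2α+β+2γ+1} e^{θT}) = ς² / θ, where ς² = Γ(2α+1)Γ(2γ+1) / Γ(2α+2γ+2). -/

import Mathlib

open MeasureTheory Filter intervalIntegral

/-!
After the rescaling `s = T u`, `t = T x`, the double integral lives on the triangle
`0 < u < x < 1` and `θ T` only enters through the weight `exp (θ T x)`. Integrating in `u` first,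
with `u = x w`, leaves `exp (θ T x)` against a power of `x` times Euler's integral
`∫ w in 0..1, w ^ a * (1 - x * w) ^ c * (1 - w) ^ d`. The normalized weight concentrates at the
endpoint `x = 1` as `T → ∞`, where Euler's integral is a beta integral.
-/

open Set Topology

lemma ae_mem_Ioo_of_mem_uIoc {a b : ℝ} (hab : a ≤ b) :
    ∀ᵐ x : ℝ, x ∈ uIoc a b → x ∈ Ioo a b := by
  filter_upwards [Measure.ae_ne volume b] with x hxb hx
  rw [uIoc_of_le hab] at hx
  exact ⟨hx.1, hx.2.lt_of_ne hxb⟩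

section Beta

variable {a b : ℝ}

lemma ofReal_rpow_mul_one_sub_rpow {w : ℝ} (hw : w ∈ Icc (0 : ℝ) 1) :
    ((w ^ a * (1 - w) ^ b : ℝ) : ℂ) =
      (w : ℂ) ^ (((a + 1 : ℝ) : ℂ) - 1) * (1 - (w : ℂ)) ^ (((b + 1 : ℝ) : ℂ) - 1) := by
  rw [Complex.ofReal_mul, Complex.ofReal_cpow hw.1, Complex.ofReal_cpow (sub_nonneg.2 hw.2)]
  push_cast
  simp only [add_sub_cancel_right]

lemma intervalIntegrable_rpow_mul_one_sub_rpow (ha : -1 < a) (hb : -1 < b) :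
    IntervalIntegrable (fun w : ℝ => w ^ a * (1 - w) ^ b) volume 0 1 := by
  have h := Complex.betaIntegral_convergent (u := ((a + 1 : ℝ) : ℂ)) (v := ((b + 1 : ℝ) : ℂ))
    (by simpa using by linarith) (by simpa using by linarith)
  have h' : IntervalIntegrable (fun w : ℝ => ((w ^ a * (1 - w) ^ b : ℝ) : ℂ)) volume 0 1 := by
    refine h.congr_uIoo fun w hw => (ofReal_rpow_mul_one_sub_rpow ?_).symm
    exact Ioo_subset_Icc_self (uIoo_of_le (zero_le_one' ℝ) ▸ hw)
  exact ⟨h'.1.re, h'.2.re⟩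

lemma integral_rpow_mul_one_sub_rpow (ha : -1 < a) (hb : -1 < b) :
    ∫ w in (0 : ℝ)..1, w ^ a * (1 - w) ^ b = ProbabilityTheory.beta (a + 1) (b + 1) := by
  rw [ProbabilityTheory.beta_eq_betaIntegralReal _ _ (by linarith) (by linarith),
    Complex.betaIntegral, ← integral_congr_Ioo_of_le zero_le_one
      fun w hw => ofReal_rpow_mul_one_sub_rpow (Ioo_subset_Icc_self hw),
    intervalIntegral.integral_ofReal, Complex.ofReal_re]

end Beta

section EulerIntegral

/-- The integrand of `eulerIntegral`. -/
noncomputable def eulerIntegrand (a c d x w : ℝ) : ℝ := w ^ a * (1 - x * w) ^ c * (1 - w) ^ d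

/-- Euler's integral for the hypergeometric function: for `|x| < 1` its value is
`B(a + 1, d + 1) * ₂F₁(-c, a + 1; a + d + 2; x)`. -/
noncomputable def eulerIntegral (a c d x : ℝ) : ℝ := ∫ w in (0 : ℝ)..1, eulerIntegrand a c d x w

variable {a c d x w : ℝ}

lemma one_sub_mul_rpow_le (hx : x ∈ Icc (0 : ℝ) 1) (hw : w ∈ Ico (0 : ℝ) 1) :
    (1 - x * w) ^ c ≤ 1 + (1 - w) ^ c := by
  have hw1 : 0 < 1 - w := sub_pos.2 hw.2
  have hxw : 1 - w ≤ 1 - x * w := sub_le_sub_left (mul_le_of_le_one_left hw.1 hx.2) 1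
  rcases le_total 0 c with hc | hc
  · have h : (1 - x * w) ^ c ≤ 1 :=
      Real.rpow_le_one (hw1.le.trans hxw) (sub_le_self 1 (mul_nonneg hx.1 hw.1)) hc
    linarith [Real.rpow_nonneg hw1.le c]
  · linarith [Real.rpow_le_rpow_of_nonpos hw1 hxw hc]

lemma eulerIntegrand_nonneg (hx : x ≤ 1) (hw : w ∈ Icc (0 : ℝ) 1) :
    0 ≤ eulerIntegrand a c d x w := by
  have hw0 : 0 ≤ w := hw.1
  have hw1 : 0 ≤ 1 - w := sub_nonneg.2 hw.2
  have hxw : 0 ≤ 1 - x * w := by nlinarith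
  unfold eulerIntegrand
  positivity

lemma eulerIntegrand_one (hw : w < 1) :
    eulerIntegrand a c d 1 w = w ^ a * (1 - w) ^ (c + d) := by
  rw [eulerIntegrand, one_mul, mul_assoc, Real.rpow_add (sub_pos.2 hw)]

lemma norm_eulerIntegrand_le (hx : x ∈ Icc (0 : ℝ) 1) (hw : w ∈ Ico (0 : ℝ) 1) :
    ‖eulerIntegrand a c d x w‖ ≤ w ^ a * (1 - w) ^ d + w ^ a * (1 - w) ^ (c + d) := by
  have hw0 : 0 ≤ w := hw.1
  have hw1 : 0 < 1 - w := sub_pos.2 hw.2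
  rw [Real.norm_of_nonneg (eulerIntegrand_nonneg hx.2 (Ico_subset_Icc_self hw))]
  calc w ^ a * (1 - x * w) ^ c * (1 - w) ^ d
      ≤ w ^ a * (1 + (1 - w) ^ c) * (1 - w) ^ d := by gcongr; exact one_sub_mul_rpow_le hx hw
    _ = w ^ a * (1 - w) ^ d + w ^ a * (1 - w) ^ (c + d) := by rw [Real.rpow_add hw1]; ring

lemma measurable_eulerIntegrand (a c d x : ℝ) : Measurable (eulerIntegrand a c d x) := by
  unfold eulerIntegrand
  fun_prop

lemma continuousAt_eulerIntegrand_left (hxw : x * w ≠ 1) :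
    ContinuousAt (fun x => eulerIntegrand a c d x w) x := by
  have h : ContinuousAt (fun x => (1 - x * w) ^ c) x :=
    ContinuousAt.rpow_const (by fun_prop) (.inl (sub_ne_zero.2 hxw.symm))
  exact (continuousAt_const.mul h).mul continuousAt_const

lemma intervalIntegrable_eulerIntegrand_bound (ha : -1 < a) (hd : -1 < d) (hcd : -1 < c + d) :
    IntervalIntegrable (fun w : ℝ => w ^ a * (1 - w) ^ d + w ^ a * (1 - w) ^ (c + d))
      volume 0 1 :=
  (intervalIntegrable_rpow_mul_one_sub_rpow ha hd).add
    (intervalIntegrable_rpow_mul_one_sub_rpow ha hcd)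

lemma intervalIntegrable_eulerIntegrand (ha : -1 < a) (hd : -1 < d) (hcd : -1 < c + d)
    (hx : x ∈ Icc (0 : ℝ) 1) :
    IntervalIntegrable (eulerIntegrand a c d x) volume 0 1 := by
  refine (intervalIntegrable_eulerIntegrand_bound ha hd hcd).mono_fun
    (measurable_eulerIntegrand a c d x).aestronglyMeasurable ?_
  rw [EventuallyLE, ae_restrict_iff' measurableSet_uIoc]
  filter_upwards [ae_mem_Ioo_of_mem_uIoc zero_le_one] with w hw hw'
  exact (norm_eulerIntegrand_le hx (Ioo_subset_Ico_self (hw hw'))).trans (le_abs_self _)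

lemma continuousOn_eulerIntegral (ha : -1 < a) (hd : -1 < d) (hcd : -1 < c + d) :
    ContinuousOn (eulerIntegral a c d) (Icc 0 1) := by
  intro x hx
  refine continuousWithinAt_of_dominated_interval
    (.of_forall fun y => (measurable_eulerIntegrand a c d y).aestronglyMeasurable)
    ?_ (intervalIntegrable_eulerIntegrand_bound ha hd hcd) ?_
  · filter_upwards [self_mem_nhdsWithin] with y hy
    filter_upwards [ae_mem_Ioo_of_mem_uIoc zero_le_one] with w hw hw'
    exact norm_eulerIntegrand_le hy (Ioo_subset_Ico_self (hw hw'))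
  · filter_upwards [ae_mem_Ioo_of_mem_uIoc zero_le_one] with w hw hw'
    have hxw : x * w < 1 := mul_lt_one_of_nonneg_of_lt_one_right hx.2 (hw hw').1.le (hw hw').2
    exact (continuousAt_eulerIntegrand_left hxw.ne).continuousWithinAt

lemma eulerIntegral_one (ha : -1 < a) (hcd : -1 < c + d) :
    eulerIntegral a c d 1 = ProbabilityTheory.beta (a + 1) (c + d + 1) := by
  rw [← integral_rpow_mul_one_sub_rpow ha hcd]
  exact integral_congr_Ioo_of_le zero_le_one fun w hw => eulerIntegrand_one hw.2

lemma rpow_mul_one_sub_rpow_mul_sub_rpow_comp_mul (hx : 0 < x) (hw : w ∈ Ioo (0 : ℝ) 1) :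
    (x * w) ^ a * (1 - x * w) ^ c * (x - x * w) ^ d = x ^ (a + d) * eulerIntegrand a c d x w := by
  rw [← mul_one_sub, Real.mul_rpow hx.le hw.1.le, Real.mul_rpow hx.le (sub_nonneg.2 hw.2.le),
    Real.rpow_add hx, eulerIntegrand]
  ring

lemma integral_rpow_mul_one_sub_rpow_mul_sub_rpow (hx : 0 < x) :
    ∫ s in (0 : ℝ)..x, s ^ a * (1 - s) ^ c * (x - s) ^ d =
      x ^ (a + d + 1) * eulerIntegral a c d x := by
  have hsubst := smul_integral_comp_mul_left (a := 0) (b := 1)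
    (fun s : ℝ => s ^ a * (1 - s) ^ c * (x - s) ^ d) x
  rw [mul_zero, mul_one] at hsubst
  rw [← hsubst, integral_congr_Ioo_of_le zero_le_one
      fun w hw => rpow_mul_one_sub_rpow_mul_sub_rpow_comp_mul hx hw,
    intervalIntegral.integral_const_mul, Real.rpow_add_one hx.ne', eulerIntegral, smul_eq_mul]
  ring

lemma intervalIntegrable_rpow_mul_one_sub_rpow_mul_sub_rpow (ha : -1 < a) (hd : -1 < d)
    (hcd : -1 < c + d) (hx : x ∈ Ioc (0 : ℝ) 1) :
    IntervalIntegrable (fun s : ℝ => s ^ a * (1 - s) ^ c * (x - s) ^ d) volume 0 x := by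
  rw [← IntervalIntegrable.comp_mul_left_iff hx.1.ne', zero_div, div_self hx.1.ne']
  refine ((intervalIntegrable_eulerIntegrand ha hd hcd
    (Ioc_subset_Icc_self hx)).const_mul (x ^ (a + d))).congr_uIoo fun w hw => ?_
  rw [uIoo_of_le zero_le_one] at hw
  exact (rpow_mul_one_sub_rpow_mul_sub_rpow_comp_mul hx.1 hw).symm

end EulerIntegral

section ExponentialPeak

lemma integral_mul_exp_mul_sub (r a b : ℝ) :
    ∫ x in a..b, r * Real.exp (r * (x - b)) = 1 - Real.exp (-(r * (b - a))) := by
  have hderiv (x : ℝ) : HasDerivAt (fun x => Real.exp (r * (x - b)))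
      (r * Real.exp (r * (x - b))) x := by
    simpa [mul_comm] using (((hasDerivAt_id x).sub_const b).const_mul r).exp
  rw [integral_eq_sub_of_hasDerivAt (fun x _ => hderiv x)
    ((by fun_prop : Continuous _).intervalIntegrable _ _)]
  simp only [sub_self, mul_zero, Real.exp_zero, ← neg_sub b a, mul_neg]

lemma tendstoUniformlyOn_mul_exp_mul_sub {b : ℝ} {u : Set ℝ} (hu : u ∈ 𝓝 b) :
    TendstoUniformlyOn (fun r x : ℝ => r * Real.exp (r * (x - b))) 0 atTop (Iic b \ u) := by
  obtain ⟨ε, hε, hεu⟩ := Metric.mem_nhds_iff.1 hu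
  have hlim : Tendsto (fun r : ℝ => r * Real.exp (-ε * r)) atTop (𝓝 0) := by
    simpa using tendsto_rpow_mul_exp_neg_mul_atTop_nhds_zero 1 ε hε
  rw [Metric.tendstoUniformlyOn_iff]
  intro δ hδ
  filter_upwards [hlim.eventually_lt_const hδ, eventually_ge_atTop 0] with r hr hr0 x hx
  have hxε : x - b ≤ -ε := by
    by_contra! h
    exact hx.2 (hεu (by rw [Real.ball_eq_Ioo]; constructor <;> linarith [mem_Iic.1 hx.1]))
  rw [Pi.zero_apply, dist_zero_left, Real.norm_of_nonneg (by positivity)]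
  calc r * Real.exp (r * (x - b)) ≤ r * Real.exp (r * -ε) := by gcongr
    _ = r * Real.exp (-ε * r) := by rw [mul_comm r (-ε)]
    _ < δ := hr

theorem tendsto_integral_mul_exp_smul {E : Type*} [NormedAddCommGroup E] [NormedSpace ℝ E]
    [CompleteSpace E] {g : ℝ → E} {L : E} {a b : ℝ} (hab : a < b)
    (hg : IntervalIntegrable g volume a b) (hL : Tendsto g (𝓝[<] b) (𝓝 L)) :
    Tendsto (fun r : ℝ => ∫ x in a..b, (r * Real.exp (r * (x - b))) • g x) atTop (𝓝 L) := by
  have hmass : Tendsto (fun r : ℝ => ∫ x in Ioo a b, r * Real.exp (r * (x - b)))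
      atTop (𝓝 1) := by
    have h : Tendsto (fun r : ℝ => 1 - Real.exp (-(r * (b - a)))) atTop (𝓝 (1 - 0)) :=
      tendsto_const_nhds.sub (Real.tendsto_exp_neg_atTop_nhds_zero.comp
        (tendsto_id.atTop_mul_const (sub_pos.2 hab)))
    simpa only [sub_zero, ← integral_mul_exp_mul_sub, integral_of_le hab.le,
      integral_Ioc_eq_integral_Ioo] using h
  simp only [integral_of_le hab.le, integral_Ioc_eq_integral_Ioo]
  refine tendsto_setIntegral_peak_smul_of_integrableOn_of_tendsto measurableSet_Ioo
    measurableSet_Ioo subset_rfl self_mem_nhdsWithin (by simp) ?_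
    (fun u hu hbu => (tendstoUniformlyOn_mul_exp_mul_sub (hu.mem_nhds hbu)).mono
      (sdiff_subset_sdiff_left fun x hx => hx.2.le))
    hmass (.of_forall fun r => (by fun_prop : Continuous _).aestronglyMeasurable)
    ((intervalIntegrable_iff_integrableOn_Ioo_of_le hab.le).1 hg)
    (by rwa [nhdsWithin_Ioo_eq_nhdsLT hab])
  filter_upwards [eventually_ge_atTop 0] with r hr x _
  positivity

end ExponentialPeak

section Triangle

/-- The open triangle `a < s < t < b` in the `(s, t)`-plane. -/
def openTriangle (a b : ℝ) : Set (ℝ × ℝ) := {p | a < p.1 ∧ p.1 < p.2 ∧ p.2 < b}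

lemma mk_mem_openTriangle_iff_left {a b s t : ℝ} :
    (s, t) ∈ openTriangle a b ↔ s ∈ Ioo a b ∧ t ∈ Ioo s b :=
  ⟨fun h => ⟨⟨h.1, h.2.1.trans h.2.2⟩, h.2⟩, fun h => ⟨h.1.1, h.2⟩⟩

lemma mk_mem_openTriangle_iff_right {a b s t : ℝ} :
    (s, t) ∈ openTriangle a b ↔ t ∈ Ioo a b ∧ s ∈ Ioo a t :=
  ⟨fun h => ⟨⟨h.1.trans h.2.1, h.2.2⟩, h.1, h.2.1⟩, fun h => ⟨h.2.1, h.2.2, h.1.2⟩⟩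

lemma measurableSet_openTriangle (a b : ℝ) : MeasurableSet (openTriangle a b) :=
  (measurableSet_lt measurable_const measurable_fst).inter
    ((measurableSet_lt measurable_fst measurable_snd).inter
      (measurableSet_lt measurable_snd measurable_const))

variable {E : Type*} [NormedAddCommGroup E]

lemma indicator_openTriangle_left (f : ℝ → ℝ → E) (a b s : ℝ) :
    (fun t => (openTriangle a b).indicator (Function.uncurry f) (s, t)) =
      (Ioo a b).indicator (fun s => (Ioo s b).indicator (f s)) s := by
  ext t
  by_cases hs : s ∈ Ioo a b <;>
    simp [indicator, mk_mem_openTriangle_iff_left, hs]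

lemma indicator_openTriangle_right (f : ℝ → ℝ → E) (a b t : ℝ) :
    (fun s => (openTriangle a b).indicator (Function.uncurry f) (s, t)) =
      (Ioo a b).indicator (fun t => (Ioo a t).indicator (fun s => f s t)) t := by
  ext s
  by_cases ht : t ∈ Ioo a b <;>
    simp [indicator, mk_mem_openTriangle_iff_right, ht]

lemma integral_indicator_openTriangle_left [NormedSpace ℝ E] (f : ℝ → ℝ → E) (a b s : ℝ) :
    ∫ t, (openTriangle a b).indicator (Function.uncurry f) (s, t) =
      (Ioo a b).indicator (fun s => ∫ t in s..b, f s t) s := by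
  rw [indicator_openTriangle_left]
  by_cases hs : s ∈ Ioo a b
  · rw [indicator_of_mem hs, indicator_of_mem hs, integral_of_le hs.2.le,
      integral_Ioc_eq_integral_Ioo, MeasureTheory.integral_indicator measurableSet_Ioo]
  · rw [indicator_of_notMem hs, indicator_of_notMem hs]
    exact integral_zero _ _

lemma integral_indicator_openTriangle_right [NormedSpace ℝ E] (f : ℝ → ℝ → E) (a b t : ℝ) :
    ∫ s, (openTriangle a b).indicator (Function.uncurry f) (s, t) =
      (Ioo a b).indicator (fun t => ∫ s in a..t, f s t) t := by
  rw [indicator_openTriangle_right]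
  by_cases ht : t ∈ Ioo a b
  · rw [indicator_of_mem ht, indicator_of_mem ht, integral_of_le ht.1.le,
      integral_Ioc_eq_integral_Ioo, MeasureTheory.integral_indicator measurableSet_Ioo]
  · rw [indicator_of_notMem ht, indicator_of_notMem ht]
    exact integral_zero _ _

theorem integral_integral_swap_openTriangle [NormedSpace ℝ E] {f : ℝ → ℝ → E} {a b : ℝ}
    (hab : a ≤ b) (hf : IntegrableOn (Function.uncurry f) (openTriangle a b)) :
    ∫ s in a..b, ∫ t in s..b, f s t = ∫ t in a..b, ∫ s in a..t, f s t := by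
  have hswap := integral_integral_swap
    (f := fun s t => (openTriangle a b).indicator (Function.uncurry f) (s, t))
    (hf.integrable_indicator (measurableSet_openTriangle a b))
  simpa only [integral_indicator_openTriangle_left, integral_indicator_openTriangle_right,
    MeasureTheory.integral_indicator measurableSet_Ioo, ← integral_Ioc_eq_integral_Ioo,
    ← integral_of_le hab] using hswap

theorem integrableOn_openTriangle {f : ℝ → ℝ → E} {a b : ℝ} (hab : a ≤ b)
    (hf : AEStronglyMeasurable (Function.uncurry f) (volume.restrict (openTriangle a b)))
    (hs : ∀ t ∈ Ioo a b, IntervalIntegrable (fun s => f s t) volume a t)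
    (ht : IntervalIntegrable (fun t => ∫ s in a..t, ‖f s t‖) volume a b) :
    IntegrableOn (Function.uncurry f) (openTriangle a b) := by
  have hA := measurableSet_openTriangle a b
  rw [← integrable_indicator_iff hA, Measure.volume_eq_prod,
    integrable_prod_iff' ((aestronglyMeasurable_indicator_iff hA).2 hf)]
  constructor
  · refine .of_forall fun t => ?_
    rw [indicator_openTriangle_right]
    by_cases h : t ∈ Ioo a b
    · rw [indicator_of_mem h, integrable_indicator_iff measurableSet_Ioo]
      exact (intervalIntegrable_iff_integrableOn_Ioo_of_le h.1.le).1 (hs t h)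
    · rw [indicator_of_notMem h]
      exact integrable_zero _ _ _
  · have hnorm := integral_indicator_openTriangle_right (fun s t => ‖f s t‖) a b
    simp only [norm_indicator_eq_indicator_norm]
    refine Integrable.congr ?_ (.of_forall fun t => (hnorm t).symm)
    exact (integrable_indicator_iff measurableSet_Ioo).2
      ((intervalIntegrable_iff_integrableOn_Ioo_of_le hab).1 ht)

end Triangle

section ExpTriangleIntegral

/-- The paper's double integral `h(T)`, for `a = 2α`, `b = β` and `c = d = γ`; the two exponents
of the factors `T - s` and `t - s` are kept independent. -/
noncomputable def expTriangleIntegral (a b c d θ T : ℝ) : ℝ :=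
  ∫ s in (0 : ℝ)..T, s ^ a * (T - s) ^ c * ∫ t in s..T, Real.exp (θ * t) * t ^ b * (t - s) ^ d

/-- The integrand of `expTriangleIntegral a b c d r 1`, as a function on the `(s, t)`-plane. -/
noncomputable def expTriangleIntegrand (a b c d r s t : ℝ) : ℝ :=
  s ^ a * (1 - s) ^ c * (Real.exp (r * t) * t ^ b * (t - s) ^ d)

/-- The density that remains, next to the factor `exp (r * t)`, once the variable `s` of
`expTriangleIntegrand` has been integrated out. -/
noncomputable def triangleDensity (a b c d x : ℝ) : ℝ :=
  x ^ (a + b + d + 1) * eulerIntegral a c d x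

variable {a b c d : ℝ}

lemma integral_exp_mul_rpow_mul_sub_rpow_comp_mul {θ T u : ℝ} (hT : 0 < T)
    (hu : u ∈ Ioo (0 : ℝ) 1) :
    ∫ t in (T * u)..T, Real.exp (θ * t) * t ^ b * (t - T * u) ^ d =
      T ^ (b + d + 1) * ∫ x in u..1, Real.exp (θ * T * x) * x ^ b * (x - u) ^ d := by
  have hsubst := smul_integral_comp_mul_left (a := u) (b := 1)
    (fun t => Real.exp (θ * t) * t ^ b * (t - T * u) ^ d) T
  rw [mul_one] at hsubst
  rw [← hsubst, smul_eq_mul, ← intervalIntegral.integral_const_mul,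
    ← intervalIntegral.integral_const_mul]
  refine integral_congr_Ioo_of_le hu.2.le fun x hx => ?_
  simp only [← mul_sub, Real.mul_rpow hT.le (hu.1.trans hx.1).le,
    Real.mul_rpow hT.le (sub_pos.2 hx.1).le, Real.rpow_add hT, Real.rpow_one, mul_assoc]
  ring

lemma expTriangleIntegral_eq_rpow_mul {θ T : ℝ} (hT : 0 < T) :
    expTriangleIntegral a b c d θ T =
      T ^ (a + b + c + d + 2) * expTriangleIntegral a b c d (θ * T) 1 := by
  have hpow : T ^ (a + b + c + d + 2) = T * T ^ a * T ^ c * T ^ (b + d + 1) := by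
    rw [show a + b + c + d + 2 = 1 + a + c + (b + d + 1) by ring, Real.rpow_add hT (1 + a + c),
      Real.rpow_add hT, Real.rpow_add hT, Real.rpow_one]
  have hsubst := smul_integral_comp_mul_left (a := 0) (b := 1) (fun s => s ^ a * (T - s) ^ c *
    ∫ t in s..T, Real.exp (θ * t) * t ^ b * (t - s) ^ d) T
  rw [mul_zero, mul_one] at hsubst
  rw [expTriangleIntegral, ← hsubst, expTriangleIntegral, smul_eq_mul,
    ← intervalIntegral.integral_const_mul, ← intervalIntegral.integral_const_mul]
  refine integral_congr_Ioo_of_le zero_le_one fun u hu => ?_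
  simp only [integral_exp_mul_rpow_mul_sub_rpow_comp_mul hT hu]
  rw [← mul_one_sub, Real.mul_rpow hT.le hu.1.le, Real.mul_rpow hT.le (sub_pos.2 hu.2).le, hpow]
  ring

lemma intervalIntegrable_triangleDensity (ha : -1 < a) (hd : -1 < d) (hcd : -1 < c + d)
    (habd : -2 < a + b + d) : IntervalIntegrable (triangleDensity a b c d) volume 0 1 :=
  (intervalIntegrable_rpow' (by linarith)).mul_continuousOn
    (uIcc_of_le (zero_le_one' ℝ) ▸ continuousOn_eulerIntegral ha hd hcd)

lemma tendsto_triangleDensity_one (ha : -1 < a) (hd : -1 < d) (hcd : -1 < c + d) :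
    Tendsto (triangleDensity a b c d) (𝓝[<] 1)
      (𝓝 (ProbabilityTheory.beta (a + 1) (c + d + 1))) := by
  have hcont : ContinuousWithinAt (triangleDensity a b c d) (Icc 0 1) 1 :=
    (Real.continuousAt_rpow_const 1 _ (.inl one_ne_zero)).continuousWithinAt.mul
      (continuousOn_eulerIntegral ha hd hcd 1 (right_mem_Icc.2 zero_le_one))
  have hone : triangleDensity a b c d 1 = ProbabilityTheory.beta (a + 1) (c + d + 1) := by
    rw [triangleDensity, Real.one_rpow, one_mul, eulerIntegral_one ha hcd]
  rw [← hone, ← nhdsWithin_Ioo_eq_nhdsLT zero_lt_one]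
  exact hcont.mono Ioo_subset_Icc_self

lemma expTriangleIntegrand_eq_mul (r s t : ℝ) : expTriangleIntegrand a b c d r s t =
    Real.exp (r * t) * t ^ b * (s ^ a * (1 - s) ^ c * (t - s) ^ d) := by
  unfold expTriangleIntegrand
  ring

lemma expTriangleIntegrand_nonneg {r s t : ℝ} (hs : s ∈ Icc 0 1) (ht : t ∈ Ici s) :
    0 ≤ expTriangleIntegrand a b c d r s t := by
  have hs0 : 0 ≤ s := hs.1
  have ht0 : 0 ≤ t := hs0.trans ht
  have hs1 : 0 ≤ 1 - s := sub_nonneg.2 hs.2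
  have hst : 0 ≤ t - s := sub_nonneg.2 ht
  unfold expTriangleIntegrand
  positivity

lemma measurable_uncurry_expTriangleIntegrand (a b c d r : ℝ) :
    Measurable (Function.uncurry (expTriangleIntegrand a b c d r)) := by
  unfold expTriangleIntegrand Function.uncurry
  fun_prop

lemma integral_expTriangleIntegrand {r t : ℝ} (ht : 0 < t) :
    ∫ s in (0 : ℝ)..t, expTriangleIntegrand a b c d r s t =
      Real.exp (r * t) * triangleDensity a b c d t := by
  simp only [expTriangleIntegrand_eq_mul, intervalIntegral.integral_const_mul]
  rw [integral_rpow_mul_one_sub_rpow_mul_sub_rpow ht, triangleDensity,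
    show a + b + d + 1 = b + (a + d + 1) by ring, Real.rpow_add ht b]
  ring

lemma integrableOn_expTriangleIntegrand (ha : -1 < a) (hd : -1 < d) (hcd : -1 < c + d)
    (habd : -2 < a + b + d) (r : ℝ) :
    IntegrableOn (Function.uncurry (expTriangleIntegrand a b c d r)) (openTriangle 0 1) := by
  refine integrableOn_openTriangle zero_le_one
    (measurable_uncurry_expTriangleIntegrand a b c d r).aestronglyMeasurable
    (fun t ht => ?_) ?_
  · simp only [expTriangleIntegrand_eq_mul]
    exact (intervalIntegrable_rpow_mul_one_sub_rpow_mul_sub_rpow ha hd hcd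
      (Ioo_subset_Ioc_self ht)).const_mul _
  · have hdensity : IntervalIntegrable (fun t => Real.exp (r * t) * triangleDensity a b c d t)
        volume 0 1 :=
      (intervalIntegrable_triangleDensity ha hd hcd habd).continuousOn_mul (by fun_prop)
    refine hdensity.congr_uIoo fun t ht => ?_
    rw [uIoo_of_le zero_le_one] at ht
    refine (integral_expTriangleIntegrand ht.1).symm.trans ?_
    exact integral_congr_Ioo_of_le ht.1.le fun s hs => (Real.norm_of_nonneg
      (expTriangleIntegrand_nonneg ⟨hs.1.le, (hs.2.trans ht.2).le⟩ hs.2.le)).symm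

lemma expTriangleIntegral_one (ha : -1 < a) (hd : -1 < d) (hcd : -1 < c + d)
    (habd : -2 < a + b + d) (r : ℝ) :
    expTriangleIntegral a b c d r 1 =
      ∫ x in (0 : ℝ)..1, Real.exp (r * x) * triangleDensity a b c d x := by
  calc expTriangleIntegral a b c d r 1
      = ∫ s in (0 : ℝ)..1, ∫ t in s..1, expTriangleIntegrand a b c d r s t := by
        simp only [expTriangleIntegral, expTriangleIntegrand, intervalIntegral.integral_const_mul]
    _ = ∫ t in (0 : ℝ)..1, ∫ s in (0 : ℝ)..t, expTriangleIntegrand a b c d r s t :=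
        integral_integral_swap_openTriangle zero_le_one
          (integrableOn_expTriangleIntegrand ha hd hcd habd r)
    _ = ∫ t in (0 : ℝ)..1, Real.exp (r * t) * triangleDensity a b c d t :=
        integral_congr_Ioo_of_le zero_le_one fun t ht => integral_expTriangleIntegrand ht.1

lemma tendsto_mul_exp_neg_mul_expTriangleIntegral_one (ha : -1 < a) (hd : -1 < d)
    (hcd : -1 < c + d) (habd : -2 < a + b + d) :
    Tendsto (fun r => r * Real.exp (-r) * expTriangleIntegral a b c d r 1) atTop
      (𝓝 (ProbabilityTheory.beta (a + 1) (c + d + 1))) := by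
  refine (tendsto_integral_mul_exp_smul zero_lt_one
    (intervalIntegrable_triangleDensity ha hd hcd habd)
    (tendsto_triangleDensity_one ha hd hcd)).congr fun r => ?_
  rw [expTriangleIntegral_one ha hd hcd habd, ← intervalIntegral.integral_const_mul]
  congr 1 with x
  rw [show r * (x - 1) = -r + r * x by ring, Real.exp_add, smul_eq_mul]
  ring

end ExpTriangleIntegral

theorem stmt_14_general {a b c d θ : ℝ} (ha : -1 < a) (hd : -1 < d) (hcd : -1 < c + d)
    (habd : -2 < a + b + d) (hθ : 0 < θ) :
    Tendsto (fun T : ℝ => expTriangleIntegral a b c d θ T /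
        (T ^ (a + b + c + d + 1) * Real.exp (θ * T))) atTop
      (𝓝 (ProbabilityTheory.beta (a + 1) (c + d + 1) / θ)) := by
  have hlim := (tendsto_mul_exp_neg_mul_expTriangleIntegral_one ha hd hcd habd).comp
    (tendsto_id.const_mul_atTop hθ)
  refine (hlim.div_const θ).congr' ?_
  filter_upwards [eventually_gt_atTop 0] with T hT
  have hpow : T ^ (a + b + c + d + 2) = T ^ (a + b + c + d + 1) * T := by
    rw [← Real.rpow_add_one hT.ne']
    ring_nf
  rw [expTriangleIntegral_eq_rpow_mul hT, hpow, Function.comp_apply, id, Real.exp_neg]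
  field_simp

/-- Lemma B.2, case `γ > -1/2`. -/
theorem stmt_14 (α β γ θ : ℝ) (hα : -(1/2 : ℝ) < α)
    (hαβγ : -(3/2 : ℝ) < α + β + γ) (hγ' : -(1/2 : ℝ) < γ) (hθ : 0 < θ)
    (h : ℝ → ℝ)
    (hdef : ∀ T : ℝ, h T = ∫ s in (0:ℝ)..T, s ^ (2*α) * (T - s) ^ γ *
      (∫ t in s..T, Real.exp (θ * t) * t ^ β * (t - s) ^ γ)) :
    Tendsto (fun T : ℝ => h T / (T ^ (2*α+β+2*γ+1) * Real.exp (θ * T))) atTop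
      (nhds ((Real.Gamma (2*α+1) * Real.Gamma (2*γ+1) / Real.Gamma (2*α+2*γ+2))
        / θ)) := by
  obtain rfl : h = expTriangleIntegral (2 * α) β γ γ θ := funext hdef
  convert stmt_14_general (a := 2 * α) (b := β) (c := γ) (d := γ) (by linarith) (by linarith)
    (by linarith) (by linarith) hθ using 3 <;> (try unfold ProbabilityTheory.beta) <;> ring_nf
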